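/- Let p and q be nonzero real numbers. The inequality (sin(x)/x)^(2p) + (tan(x)/x)^p > 2 holds for every x ∈ (0, π/2) if and only if p > 0 or p ≤ −(ln 2)/(2(ln π − ln 2)); and the inequality (sin(x)/x)^(2q) + (tan(x)/x)^q < 2 holds for every x ∈ (0, π/2) if and only if −3/5 ≤ q < 0. -/

import Mathlib

open Real Set

theorem nonneg_of_deriv {f f' : ℝ → ℝ} (h0 : f 0 = 0) (hf : ∀ y, HasDerivAt f (f' y) y)
    (hp : ∀ y, 0 ≤ y → 0 ≤ f' y) (y : ℝ) (hy : 0 ≤ y) : 0 ≤ f y := by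
  have h : MonotoneOn f (Ici 0) := by
    apply monotoneOn_of_deriv_nonneg (convex_Ici 0)
    · exact fun z _ => (hf z).continuousAt.continuousWithinAt
    · exact fun z _ => (hf z).differentiableAt.differentiableWithinAt
    · intro z hz
      rw [(hf z).deriv]
      rw [interior_Ici] at hz
      exact hp z (le_of_lt hz)
  rw [← h0]
  exact h (by simp) hy hy

theorem tb1 (y : ℝ) (hy : 0 ≤ y) : 0 ≤ y - sin y := sub_nonneg.2 (sin_le hy)

theorem tb2 (y : ℝ) (hy : 0 ≤ y) : 0 ≤ cos y - (1 - 1/2*y^2) := by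
  refine nonneg_of_deriv (f := fun y => cos y - (1 - 1/2*y^2)) (f' := fun y => (y) - sin y)
    (by norm_num) (fun y => ?_) tb1 y hy
  have hs := Real.hasDerivAt_sin y
  have hc := Real.hasDerivAt_cos y
  have hi := hasDerivAt_id' y
  have h := hc
  have h := h.add ((hi.pow 0).const_mul (-1 : ℝ))
  have h := h.add ((hi.pow 2).const_mul (1/2 : ℝ))
  refine (h.congr_deriv ?_).congr_of_eventuallyEq (Filter.Eventually.of_forall fun z => ?_)
  · norm_num; ring
  · simp; ring

theorem tb3 (y : ℝ) (hy : 0 ≤ y) : 0 ≤ sin y - (y - 1/6*y^3) := by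
  refine nonneg_of_deriv (f := fun y => sin y - (y - 1/6*y^3)) (f' := fun y => cos y - (1 - 1/2*y^2))
    (by norm_num) (fun y => ?_) tb2 y hy
  have hs := Real.hasDerivAt_sin y
  have hc := Real.hasDerivAt_cos y
  have hi := hasDerivAt_id' y
  have h := hs
  have h := h.add ((hi.pow 1).const_mul (-1 : ℝ))
  have h := h.add ((hi.pow 3).const_mul (1/6 : ℝ))
  refine (h.congr_deriv ?_).congr_of_eventuallyEq (Filter.Eventually.of_forall fun z => ?_)
  · norm_num; ring
  · simp; ring

theorem tb4 (y : ℝ) (hy : 0 ≤ y) : 0 ≤ (1 - 1/2*y^2 + 1/24*y^4) - cos y := by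
  refine nonneg_of_deriv (f := fun y => (1 - 1/2*y^2 + 1/24*y^4) - cos y) (f' := fun y => sin y - (y - 1/6*y^3))
    (by norm_num) (fun y => ?_) tb3 y hy
  have hs := Real.hasDerivAt_sin y
  have hc := Real.hasDerivAt_cos y
  have hi := hasDerivAt_id' y
  have h := hc
  have h := h.add ((hi.pow 0).const_mul (-1 : ℝ))
  have h := h.add ((hi.pow 2).const_mul (1/2 : ℝ))
  have h := h.add ((hi.pow 4).const_mul (-1/24 : ℝ))
  have h := h.neg
  refine (h.congr_deriv ?_).congr_of_eventuallyEq (Filter.Eventually.of_forall fun z => ?_)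
  · norm_num; ring
  · simp; ring

theorem tb5 (y : ℝ) (hy : 0 ≤ y) : 0 ≤ (y - 1/6*y^3 + 1/120*y^5) - sin y := by
  refine nonneg_of_deriv (f := fun y => (y - 1/6*y^3 + 1/120*y^5) - sin y) (f' := fun y => (1 - 1/2*y^2 + 1/24*y^4) - cos y)
    (by norm_num) (fun y => ?_) tb4 y hy
  have hs := Real.hasDerivAt_sin y
  have hc := Real.hasDerivAt_cos y
  have hi := hasDerivAt_id' y
  have h := hs
  have h := h.add ((hi.pow 1).const_mul (-1 : ℝ))
  have h := h.add ((hi.pow 3).const_mul (1/6 : ℝ))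
  have h := h.add ((hi.pow 5).const_mul (-1/120 : ℝ))
  have h := h.neg
  refine (h.congr_deriv ?_).congr_of_eventuallyEq (Filter.Eventually.of_forall fun z => ?_)
  · norm_num; ring
  · simp; ring

theorem tb6 (y : ℝ) (hy : 0 ≤ y) : 0 ≤ cos y - (1 - 1/2*y^2 + 1/24*y^4 - 1/720*y^6) := by
  refine nonneg_of_deriv (f := fun y => cos y - (1 - 1/2*y^2 + 1/24*y^4 - 1/720*y^6)) (f' := fun y => (y - 1/6*y^3 + 1/120*y^5) - sin y)
    (by norm_num) (fun y => ?_) tb5 y hy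
  have hs := Real.hasDerivAt_sin y
  have hc := Real.hasDerivAt_cos y
  have hi := hasDerivAt_id' y
  have h := hc
  have h := h.add ((hi.pow 0).const_mul (-1 : ℝ))
  have h := h.add ((hi.pow 2).const_mul (1/2 : ℝ))
  have h := h.add ((hi.pow 4).const_mul (-1/24 : ℝ))
  have h := h.add ((hi.pow 6).const_mul (1/720 : ℝ))
  refine (h.congr_deriv ?_).congr_of_eventuallyEq (Filter.Eventually.of_forall fun z => ?_)
  · norm_num; ring
  · simp; ring

theorem tb7 (y : ℝ) (hy : 0 ≤ y) : 0 ≤ sin y - (y - 1/6*y^3 + 1/120*y^5 - 1/5040*y^7) := by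
  refine nonneg_of_deriv (f := fun y => sin y - (y - 1/6*y^3 + 1/120*y^5 - 1/5040*y^7)) (f' := fun y => cos y - (1 - 1/2*y^2 + 1/24*y^4 - 1/720*y^6))
    (by norm_num) (fun y => ?_) tb6 y hy
  have hs := Real.hasDerivAt_sin y
  have hc := Real.hasDerivAt_cos y
  have hi := hasDerivAt_id' y
  have h := hs
  have h := h.add ((hi.pow 1).const_mul (-1 : ℝ))
  have h := h.add ((hi.pow 3).const_mul (1/6 : ℝ))
  have h := h.add ((hi.pow 5).const_mul (-1/120 : ℝ))
  have h := h.add ((hi.pow 7).const_mul (1/5040 : ℝ))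
  refine (h.congr_deriv ?_).congr_of_eventuallyEq (Filter.Eventually.of_forall fun z => ?_)
  · norm_num; ring
  · simp; ring

theorem tb8 (y : ℝ) (hy : 0 ≤ y) : 0 ≤ (1 - 1/2*y^2 + 1/24*y^4 - 1/720*y^6 + 1/40320*y^8) - cos y := by
  refine nonneg_of_deriv (f := fun y => (1 - 1/2*y^2 + 1/24*y^4 - 1/720*y^6 + 1/40320*y^8) - cos y) (f' := fun y => sin y - (y - 1/6*y^3 + 1/120*y^5 - 1/5040*y^7))
    (by norm_num) (fun y => ?_) tb7 y hy
  have hs := Real.hasDerivAt_sin y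
  have hc := Real.hasDerivAt_cos y
  have hi := hasDerivAt_id' y
  have h := hc
  have h := h.add ((hi.pow 0).const_mul (-1 : ℝ))
  have h := h.add ((hi.pow 2).const_mul (1/2 : ℝ))
  have h := h.add ((hi.pow 4).const_mul (-1/24 : ℝ))
  have h := h.add ((hi.pow 6).const_mul (1/720 : ℝ))
  have h := h.add ((hi.pow 8).const_mul (-1/40320 : ℝ))
  have h := h.neg
  refine (h.congr_deriv ?_).congr_of_eventuallyEq (Filter.Eventually.of_forall fun z => ?_)
  · norm_num; ring
  · simp; ring

theorem tb9 (y : ℝ) (hy : 0 ≤ y) : 0 ≤ (y - 1/6*y^3 + 1/120*y^5 - 1/5040*y^7 + 1/362880*y^9) - sin y := by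
  refine nonneg_of_deriv (f := fun y => (y - 1/6*y^3 + 1/120*y^5 - 1/5040*y^7 + 1/362880*y^9) - sin y) (f' := fun y => (1 - 1/2*y^2 + 1/24*y^4 - 1/720*y^6 + 1/40320*y^8) - cos y)
    (by norm_num) (fun y => ?_) tb8 y hy
  have hs := Real.hasDerivAt_sin y
  have hc := Real.hasDerivAt_cos y
  have hi := hasDerivAt_id' y
  have h := hs
  have h := h.add ((hi.pow 1).const_mul (-1 : ℝ))
  have h := h.add ((hi.pow 3).const_mul (1/6 : ℝ))
  have h := h.add ((hi.pow 5).const_mul (-1/120 : ℝ))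
  have h := h.add ((hi.pow 7).const_mul (1/5040 : ℝ))
  have h := h.add ((hi.pow 9).const_mul (-1/362880 : ℝ))
  have h := h.neg
  refine (h.congr_deriv ?_).congr_of_eventuallyEq (Filter.Eventually.of_forall fun z => ?_)
  · norm_num; ring
  · simp; ring

theorem tb10 (y : ℝ) (hy : 0 ≤ y) : 0 ≤ cos y - (1 - 1/2*y^2 + 1/24*y^4 - 1/720*y^6 + 1/40320*y^8 - 1/3628800*y^10) := by
  refine nonneg_of_deriv (f := fun y => cos y - (1 - 1/2*y^2 + 1/24*y^4 - 1/720*y^6 + 1/40320*y^8 - 1/3628800*y^10)) (f' := fun y => (y - 1/6*y^3 + 1/120*y^5 - 1/5040*y^7 + 1/362880*y^9) - sin y)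
    (by norm_num) (fun y => ?_) tb9 y hy
  have hs := Real.hasDerivAt_sin y
  have hc := Real.hasDerivAt_cos y
  have hi := hasDerivAt_id' y
  have h := hc
  have h := h.add ((hi.pow 0).const_mul (-1 : ℝ))
  have h := h.add ((hi.pow 2).const_mul (1/2 : ℝ))
  have h := h.add ((hi.pow 4).const_mul (-1/24 : ℝ))
  have h := h.add ((hi.pow 6).const_mul (1/720 : ℝ))
  have h := h.add ((hi.pow 8).const_mul (-1/40320 : ℝ))
  have h := h.add ((hi.pow 10).const_mul (1/3628800 : ℝ))
  refine (h.congr_deriv ?_).congr_of_eventuallyEq (Filter.Eventually.of_forall fun z => ?_)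
  · norm_num; ring
  · simp; ring

theorem tb11 (y : ℝ) (hy : 0 ≤ y) : 0 ≤ sin y - (y - 1/6*y^3 + 1/120*y^5 - 1/5040*y^7 + 1/362880*y^9 - 1/39916800*y^11) := by
  refine nonneg_of_deriv (f := fun y => sin y - (y - 1/6*y^3 + 1/120*y^5 - 1/5040*y^7 + 1/362880*y^9 - 1/39916800*y^11)) (f' := fun y => cos y - (1 - 1/2*y^2 + 1/24*y^4 - 1/720*y^6 + 1/40320*y^8 - 1/3628800*y^10))
    (by norm_num) (fun y => ?_) tb10 y hy
  have hs := Real.hasDerivAt_sin y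
  have hc := Real.hasDerivAt_cos y
  have hi := hasDerivAt_id' y
  have h := hs
  have h := h.add ((hi.pow 1).const_mul (-1 : ℝ))
  have h := h.add ((hi.pow 3).const_mul (1/6 : ℝ))
  have h := h.add ((hi.pow 5).const_mul (-1/120 : ℝ))
  have h := h.add ((hi.pow 7).const_mul (1/5040 : ℝ))
  have h := h.add ((hi.pow 9).const_mul (-1/362880 : ℝ))
  have h := h.add ((hi.pow 11).const_mul (1/39916800 : ℝ))
  refine (h.congr_deriv ?_).congr_of_eventuallyEq (Filter.Eventually.of_forall fun z => ?_)
  · norm_num; ring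
  · simp; ring

noncomputable def A1 (t : ℝ) : ℝ := 1/6 - 1/120*t + 1/5040*t^2 - 1/362880*t^3 + 1/39916800*t^4

noncomputable def A0 (t : ℝ) : ℝ := 1/6 - 1/120*t + 1/5040*t^2 - 1/362880*t^3

noncomputable def B1 (t : ℝ) : ℝ := 1/12 - 1/180*t + 1/6720*t^2 - 1/453600*t^3 + 1/39916800*t^4

noncomputable def B0 (t : ℝ) : ℝ := 1/12 - 1/180*t + 1/6720*t^2 - 1/362880*t^3

noncomputable def D1 (t : ℝ) : ℝ := 1/3 - 1/30*t + 1/840*t^2 - 1/45360*t^3 + 1/3628800*t^4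

noncomputable def D0 (t : ℝ) : ℝ := 1/3 - 1/30*t + 1/840*t^2 - 1/45360*t^3 - 1/39916800*t^4

theorem parts (y : ℝ) (h0 : 0 < y) : ∃ α β δ : ℝ,
    y - sin y = y ^ 3 * α ∧ 2 - 2 * cos y - y * sin y = y ^ 4 * β ∧
    sin y - y * cos y = y ^ 3 * δ ∧ A0 (y^2) ≤ α ∧ α ≤ A1 (y^2) ∧ B0 (y^2) ≤ β ∧ β ≤ B1 (y^2) ∧
    D0 (y^2) ≤ δ ∧ δ ≤ D1 (y^2) := by
  have h3 : 0 < y ^ 3 := by positivity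
  have h4 : 0 < y ^ 4 := by positivity
  have e1 := tb8 y h0.le
  have e2 := tb9 y h0.le
  have e3 := tb10 y h0.le
  have e4 := tb11 y h0.le
  have e5 := mul_nonneg h0.le e1
  have e6 := mul_nonneg h0.le e2
  have e7 := mul_nonneg h0.le e3
  have e8 := mul_nonneg h0.le e4
  refine ⟨(y - sin y) / y ^ 3, (2 - 2 * cos y - y * sin y) / y ^ 4, (sin y - y * cos y) / y ^ 3,
    by field_simp, by field_simp, by field_simp, ?_, ?_, ?_, ?_, ?_, ?_⟩
  · rw [le_div_iff₀ h3, A0]; linarith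
  · rw [div_le_iff₀ h3, A1]; linarith
  · rw [le_div_iff₀ h4, B0]; linarith
  · rw [div_le_iff₀ h4, B1]; linarith
  · rw [le_div_iff₀ h3, D0]; linarith
  · rw [div_le_iff₀ h3, D1]; linarith

theorem A0_pos (t : ℝ) (h0 : 0 ≤ t) (h1 : t ≤ 987/100) : 0 < A0 t := by
  obtain ⟨u, hu⟩ : ∃ u, u = t - 0 := ⟨_, rfl⟩
  obtain ⟨r, hr⟩ : ∃ r, r = 987/100 - t := ⟨_, rfl⟩
  have hu0 : 0 ≤ u := by linarith
  have hr0 : 0 ≤ r := by linarith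
  have key : A0 t = (500000/2884514409*(u^0*r^3) + 
      139250/320501601*(u^1*r^2) + 
      473105/1282006404*(u^2*r^1) + 
      21567097/205121024640*(u^3*r^0)) := by
    rw [hu, hr]; simp only [A0]; ring
  have hur : 0 < u ∨ 0 < r := by
    rcases hu0.lt_or_eq with h | h
    · exact Or.inl h
    · right; linarith
  rw [key]
  rcases hur with h | h <;> positivity

theorem B0_pos (t : ℝ) (h0 : 0 ≤ t) (h1 : t ≤ 987/100) : 0 < B0 t := by
  obtain ⟨u, hu⟩ : ∃ u, u = t - 0 := ⟨_, rfl⟩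
  obtain ⟨r, hr⟩ : ∃ r, r = 987/100 - t := ⟨_, rfl⟩
  have hu0 : 0 ≤ u := by linarith
  have hr0 : 0 ≤ r := by linarith
  have key : B0 t = (250000/2884514409*(u^0*r^3) + 
      585500/2884514409*(u^1*r^2) + 
      7431835/46152230544*(u^2*r^1) + 
      77466073/1846089221760*(u^3*r^0)) := by
    rw [hu, hr]; simp only [B0]; ring
  have hur : 0 < u ∨ 0 < r := by
    rcases hu0.lt_or_eq with h | h
    · exact Or.inl h
    · right; linarith
  rw [key]
  rcases hur with h | h <;> positivity

theorem D0_pos (t : ℝ) (h0 : 0 ≤ t) (h1 : t ≤ 987/100) : 0 < D0 t := by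
  obtain ⟨u, hu⟩ : ∃ u, u = t - 0 := ⟨_, rfl⟩
  obtain ⟨r, hr⟩ : ∃ r, r = 987/100 - t := ⟨_, rfl⟩
  have hu0 : 0 ≤ u := by linarith
  have hr0 : 0 ≤ r := by linarith
  have key : D0 t = (100000000/2847015721683*(u^0*r^4) + 
      301300000/2847015721683*(u^1*r^3) + 
      112897250/949005240561*(u^2*r^2) + 
      74277485/1265340320748*(u^3*r^1) + 
      696051077417/66809968935494400*(u^4*r^0)) := by
    rw [hu, hr]; simp only [D0]; ring
  have hur : 0 < u ∨ 0 < r := by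
    rcases hu0.lt_or_eq with h | h
    · exact Or.inl h
    · right; linarith
  rw [key]
  rcases hur with h | h <;> positivity

theorem ineq_a (t : ℝ) (h0 : 0 < t) (h1 : t ≤ 987/100) : 0 < (1 - (3/5) * (t * A1 t)) * (B0 t * D0 t) - (1 - t * A0 t) * (A1 t)^2 := by
  obtain ⟨u, hu⟩ : ∃ u, u = t - 0 := ⟨_, rfl⟩
  obtain ⟨r, hr⟩ : ∃ r, r = 987/100 - t := ⟨_, rfl⟩
  have hu0 : 0 ≤ u := by linarith
  have hr0 : 0 ≤ r := by linarith
  have key : (1 - (3/5) * (t * A1 t)) * (B0 t * D0 t) - (1 - t * A0 t) * (A1 t)^2 = t^2 * (2000000000000000000/165818633132306826617773544989461*(u^0*r^10) + 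
      49533687500000000000/497455899396920479853320634968383*(u^1*r^9) + 
      2027039019828125000000/5472014893366125278386526984652213*(u^2*r^8) + 
      4474221360732109375000/5472014893366125278386526984652213*(u^3*r^7) + 
      84255034414439843750/71065128485274354264760090709769*(u^4*r^6) + 
      29512050747156160521875/25014925226816572701195551929838688*(u^5*r^5) + 
      3591305145833520731010125/4402626839919716795410417139651609088*(u^6*r^4) + 
      23844451487301928953900475/61636775758876035135745839955122527232*(u^7*r^3) + 
      1978906452303869694784180421/16436473535700276036198890654699340595200*(u^8*r^2) + 
      12161284420558805149873404839/547882451190009201206629688489978019840000*(u^9*r^1) + 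
      604944173710591901017727567653/328729470714005520723977813093986811904000000*(u^10*r^0)) := by
    rw [hu, hr]; simp only [A0, A1, B0, D0]; ring
  have hur : 0 < u ∨ 0 < r := by
    rcases hu0.lt_or_eq with h | h
    · exact Or.inl h
    · right; linarith
  rw [key]
  rcases hur with h | h <;> positivity

theorem ineq_b (t : ℝ) (h0 : 0 < t) (h1 : t ≤ 121/25) : 0 < (1 - t * A1 t) * (A0 t)^2 - (1 - (3/4) * (t * A0 t)) * (B1 t * D1 t) := by
  obtain ⟨u, hu⟩ : ∃ u, u = t - 0 := ⟨_, rfl⟩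
  obtain ⟨r, hr⟩ : ∃ r, r = 121/25 - t := ⟨_, rfl⟩
  have hu0 : 0 ≤ u := by linarith
  have hr0 : 0 ≤ r := by linarith
  have key : (1 - t * A1 t) * (A0 t)^2 - (1 - (3/4) * (t * A0 t)) * (B1 t * D1 t) = t * (476837158203125/23443991823409851200636448*(u^0*r^11) + 
      33550262451171875/179026846651493409168496512*(u^1*r^10) + 
      557374725341796875/716107386605973636673986048*(u^2*r^9) + 
      74235744798583984375/38669798876722576380395246592*(u^3*r^8) + 
      6747738594659130859375/2165508737096464277302133809152*(u^4*r^7) + 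
      1256623243087152734375/360918122849410712883688968192*(u^5*r^6) + 
      5932012364323054473859375/2182832806993235991520550879625216*(u^6*r^5) + 
      2747795936510365119558125/1870999548851345135589043611107328*(u^7*r^4) + 
      27784654205660307625595995/52387987367837663796493221111005184*(u^8*r^3) + 
      1338503300857979513874203605/11315805271452935380042535759977119744*(u^9*r^2) + 
      321227582865144849639160967/23574594315526948708421949499952332800*(u^10*r^1) + 
      716141630330795593333949330867/1555923224824778614755848666996853964800000*(u^11*r^0)) := by
    rw [hu, hr]; simp only [A0, A1, B1, D1]; ring
  have hur : 0 < u ∨ 0 < r := by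
    rcases hu0.lt_or_eq with h | h
    · exact Or.inl h
    · right; linarith
  rw [key]
  rcases hur with h | h <;> positivity

theorem ineq_c (t : ℝ) (h0 : 0 < t) (h1 : t ≤ 144/25) : 0 < (1 - t * A1 t) * (A0 t)^2 - (1 - (39/50) * (t * A0 t)) * (B1 t * D1 t) := by
  obtain ⟨u, hu⟩ : ∃ u, u = t - 0 := ⟨_, rfl⟩
  obtain ⟨r, hr⟩ : ∃ r, r = 144/25 - t := ⟨_, rfl⟩
  have hu0 : 0 ≤ u := by linarith
  have hr0 : 0 ≤ r := by linarith
  have key : (1 - t * A1 t) * (A0 t)^2 - (1 - (39/50) * (t * A0 t)) * (B1 t * D1 t) = t * (95367431640625/26498949067796948044480512*(u^0*r^11) + 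
      669097900390625/20610293719397626256818176*(u^1*r^10) + 
      24471783447265625/185492643474578636311363584*(u^2*r^9) + 
      24039518505859375/75571076971124629608333312*(u^3*r^8) + 
      1199980117017578125/2380488924590425832662499328*(u^4*r^7) + 
      1306356516369671875/2380488924590425832662499328*(u^5*r^6) + 
      6931175248212010625/16663422472132980828637495296*(u^6*r^5) + 
      3617067678852259175/16663422472132980828637495296*(u^7*r^4) + 
      4159979325157529021/55544741573776602762124984320*(u^8*r^3) + 
      38945807329517108903/2499513370819947124295624294400*(u^9*r^2) + 
      32370386043423273917/20829278090166226035796869120000*(u^10*r^1) + 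
      185991141219272022797/7810979283812334763423825920000000*(u^11*r^0)) := by
    rw [hu, hr]; simp only [A0, A1, B1, D1]; ring
  have hur : 0 < u ∨ 0 < r := by
    rcases hu0.lt_or_eq with h | h
    · exact Or.inl h
    · right; linarith
  rw [key]
  rcases hur with h | h <;> positivity

theorem ineq_d (t : ℝ) (h0 : 144/25 ≤ t) (h1 : t ≤ 987/100) : 0 < (1 - (77/100) * (t * A1 t)) * (B0 t * D0 t) - (1 - t * A0 t) * (A1 t)^2 := by
  obtain ⟨u, hu⟩ : ∃ u, u = t - 144/25 := ⟨_, rfl⟩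
  obtain ⟨r, hr⟩ : ∃ r, r = 987/100 - t := ⟨_, rfl⟩
  have hu0 : 0 ≤ u := by linarith
  have hr0 : 0 ≤ r := by linarith
  have key : (1 - (77/100) * (t * A1 t)) * (B0 t * D0 t) - (1 - t * A0 t) * (A1 t)^2 = (144942218364765286372697178112/225991777452422388560969283779702358515625*(u^0*r^12) + 
      5516117229781568264317458317312/96853618908181023668986835905586725078125*(u^1*r^11) + 
      393891617553038700834269665746944/677975332357267165682907851339107075546875*(u^2*r^10) + 
      380354552456445856166818086205952/135595066471453433136581570267821415109375*(u^3*r^9) + 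
      52868825956227802824108503041024/6456907927212068244599122393705781671875*(u^4*r^8) + 
      10813971413724924490786593754292434/677975332357267165682907851339107075546875*(u^5*r^7) + 
      8661179309216778931248643170701/398574563408152360777723604549739609375*(u^6*r^6) + 
      261738941289368228371436852768219009/12397263220247171029630314995915100810000000*(u^7*r^5) + 
      2960196636440754956893181207110571/202404297473423200483760244831266952000000*(u^8*r^4) + 
      320937265803716116594247553699522463/45338562634046796908362294842203797248000000*(u^9*r^3) + 
      5513044895364817232040951536162540221/2418056673815829168445989058250869186560000000*(u^10*r^2) + 
      18416457234866787801497408208911251/41871111234906132786943533476205527040000000*(u^11*r^1) + 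
      851257213994774014939652812044433003/22107946732030438111506185675436518277120000000*(u^12*r^0)) := by
    rw [hu, hr]; simp only [A0, A1, B0, D0]; ring
  have hur : 0 < u ∨ 0 < r := by
    rcases hu0.lt_or_eq with h | h
    · exact Or.inl h
    · right; linarith
  rw [key]
  rcases hur with h | h <;> positivity

theorem ineq_e_aux (s t : ℝ) : (1 - t * A1 t) * (A0 t)^2 - (1 - s * (t * A0 t)) * (B1 t * D1 t) =
    t * ((s - 3/5) * (A0 t * B1 t * D1 t) + t * (- 1/9450 + 1/54000*t - 55289/35925120000*t^2 + 40783/502951680000*t^3 - 15203/5029516800000*t^4 + 13253/158429779200000*t^5 - 17767/10139505868800000*t^6 + 4217/152092588032000000*t^7 - 151/469314271641600000*t^8 + 67/26281599211929600000*t^9 - 1/87605330706432000000*t^10)) := by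
  simp only [A0, A1, B1, D1]; ring

theorem ineq_e (s : ℝ) (hs : 3/5 < s) : ∃ τ > 0, ∀ t, 0 < t → t < τ → 0 < (1 - t * A1 t) * (A0 t)^2 - (1 - s * (t * A0 t)) * (B1 t * D1 t) := by
  have hc : Continuous (fun t : ℝ => (s - 3/5) * (A0 t * B1 t * D1 t) + t * (- 1/9450 + 1/54000*t - 55289/35925120000*t^2 + 40783/502951680000*t^3 - 15203/5029516800000*t^4 + 13253/158429779200000*t^5 - 17767/10139505868800000*t^6 + 4217/152092588032000000*t^7 - 151/469314271641600000*t^8 + 67/26281599211929600000*t^9 - 1/87605330706432000000*t^10)) := by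
    unfold A0 B1 D1; fun_prop
  have h0 : 0 < (fun t : ℝ => (s - 3/5) * (A0 t * B1 t * D1 t) + t * (- 1/9450 + 1/54000*t - 55289/35925120000*t^2 + 40783/502951680000*t^3 - 15203/5029516800000*t^4 + 13253/158429779200000*t^5 - 17767/10139505868800000*t^6 + 4217/152092588032000000*t^7 - 151/469314271641600000*t^8 + 67/26281599211929600000*t^9 - 1/87605330706432000000*t^10)) 0 := by
    simp only [A0, B1, D1]; norm_num; linarith
  have := hc.continuousAt.eventually (lt_mem_nhds h0)
  obtain ⟨τ, hτ, h⟩ := Metric.eventually_nhds_iff.1 this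
  refine ⟨τ, hτ, fun t ht1 ht2 => ?_⟩
  rw [ineq_e_aux]
  exact mul_pos ht1 (h (by rw [Real.dist_eq, sub_zero, abs_of_pos ht1]; exact ht2))

noncomputable def PP (σ y : ℝ) : ℝ :=
  (y - σ * (y - sin y)) * ((2 - 2 * cos y - y * sin y) * (sin y - y * cos y)) -
    y * sin y * (y - sin y) ^ 2

theorem sq_le_987 {y : ℝ} (h0 : 0 < y) (h1 : y < π) : y ^ 2 ≤ 987 / 100 := by
  have := pi_lt_d4
  nlinarith

theorem signs {y : ℝ} (h0 : 0 < y) (h1 : y < π) :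
    0 < y - sin y ∧ 0 < 2 - 2 * cos y - y * sin y ∧ 0 < sin y - y * cos y := by
  have ht : 0 < y ^ 2 := by positivity
  have h2 := sq_le_987 h0 h1
  obtain ⟨α, β, δ, e1, e2, e3, a0, a1, b0, b1, d0, d1⟩ := parts y h0
  have := (A0_pos _ ht.le h2).trans_le a0
  have := (B0_pos _ ht.le h2).trans_le b0
  have := (D0_pos _ ht.le h2).trans_le d0
  rw [e1, e2, e3]
  refine ⟨?_, ?_, ?_⟩ <;> positivity

theorem PP_pos {σ y : ℝ} (h0 : 0 < y) (h1 : y < π) (hσ : 0 ≤ σ) (hσ1 : σ ≤ 1)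
    (h : 0 < (1 - σ * (y^2 * A1 (y^2))) * (B0 (y^2) * D0 (y^2)) -
      (1 - y^2 * A0 (y^2)) * (A1 (y^2))^2) : 0 < PP σ y := by
  have ht : 0 < y ^ 2 := by positivity
  have h2 := sq_le_987 h0 h1
  have hS := sin_pos_of_pos_of_lt_pi h0 h1
  obtain ⟨α, β, δ, e1, e2, e3, a0, a1, b0, b1, d0, d1⟩ := parts y h0
  have hA := A0_pos _ ht.le h2
  have hB := B0_pos _ ht.le h2
  have hD := D0_pos _ ht.le h2
  have hα := hA.trans_le a0
  have hβ := hB.trans_le b0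
  have hδ := hD.trans_le d0
  have eS : sin y = y * (1 - y ^ 2 * α) := by linarith
  have hς : 0 < 1 - y ^ 2 * α := by
    rw [eS] at hS
    exact pos_of_mul_pos_right hS h0.le
  have hσα : 0 < 1 - σ * (y ^ 2 * α) := by
    have : 0 ≤ y ^ 2 * α := by positivity
    nlinarith
  have e : PP σ y = y ^ 8 * ((1 - σ * (y^2 * α)) * (β * δ) - (1 - y^2 * α) * α ^ 2) := by
    rw [PP, e1, e2, e3, eS]; ring
  rw [e]
  apply mul_pos (by positivity)
  have i1 : (1 - σ * (y^2 * A1 (y^2))) * (B0 (y^2) * D0 (y^2)) ≤ (1 - σ * (y^2 * α)) * (β * δ) := by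
    calc _ ≤ (1 - σ * (y^2 * α)) * (B0 (y^2) * D0 (y^2)) := by gcongr
      _ ≤ _ := by gcongr
  have i2 : (1 - y^2 * α) * α ^ 2 ≤ (1 - y^2 * A0 (y^2)) * (A1 (y^2))^2 := by
    calc _ ≤ (1 - y^2 * α) * (A1 (y^2))^2 := by gcongr
      _ ≤ _ := by gcongr
  linarith

theorem PP_neg {σ y : ℝ} (h0 : 0 < y) (h1 : y < π) (hσ : 0 ≤ σ) (hσ1 : σ ≤ 1)
    (h : 0 < (1 - y^2 * A1 (y^2)) * (A0 (y^2))^2 -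
      (1 - σ * (y^2 * A0 (y^2))) * (B1 (y^2) * D1 (y^2))) : PP σ y < 0 := by
  have ht : 0 < y ^ 2 := by positivity
  have h2 := sq_le_987 h0 h1
  have hS := sin_pos_of_pos_of_lt_pi h0 h1
  obtain ⟨α, β, δ, e1, e2, e3, a0, a1, b0, b1, d0, d1⟩ := parts y h0
  have hA := A0_pos _ ht.le h2
  have hB := B0_pos _ ht.le h2
  have hD := D0_pos _ ht.le h2
  have hα := hA.trans_le a0
  have hβ := hB.trans_le b0
  have hδ := hD.trans_le d0
  have eS : sin y = y * (1 - y ^ 2 * α) := by linarith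
  have hς : 0 < 1 - y ^ 2 * α := by
    rw [eS] at hS
    exact pos_of_mul_pos_right hS h0.le
  have hσα : 0 < 1 - σ * (y ^ 2 * α) := by
    have : 0 ≤ y ^ 2 * α := by positivity
    nlinarith
  have e : PP σ y = y ^ 8 * ((1 - σ * (y^2 * α)) * (β * δ) - (1 - y^2 * α) * α ^ 2) := by
    rw [PP, e1, e2, e3, eS]; ring
  rw [e]
  apply mul_neg_of_pos_of_neg (by positivity)
  have hβ1 := hβ.trans_le b1
  have hδ1 := hδ.trans_le d1
  have i1 : (1 - σ * (y^2 * α)) * (β * δ) ≤ (1 - σ * (y^2 * A0 (y^2))) * (B1 (y^2) * D1 (y^2)) := by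
    calc _ ≤ (1 - σ * (y^2 * α)) * (B1 (y^2) * D1 (y^2)) := by gcongr
      _ ≤ _ := by gcongr
  have i2 : (1 - y^2 * A1 (y^2)) * (A0 (y^2))^2 ≤ (1 - y^2 * α) * α ^ 2 := by
    calc _ ≤ (1 - y^2 * α) * (A0 (y^2))^2 := by gcongr
      _ ≤ _ := by gcongr
  linarith

noncomputable def Lf (σ y : ℝ) : ℝ :=
  log (y - sin y) + log (1 - cos y) - log (sin y) - log (2 - 2 * cos y - y * sin y) -
    σ * (log y - log (sin y))

theorem cos_lt_one' {y : ℝ} (h0 : 0 < y) (h1 : y < π) : cos y < 1 := by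
  have := Real.cos_lt_cos_of_nonneg_of_le_pi le_rfl h1.le h0
  simpa using this

theorem Lf_deriv (σ : ℝ) {y : ℝ} (h0 : 0 < y) (h1 : y < π) :
    HasDerivAt (Lf σ)
      (PP σ y / (y * sin y * (y - sin y) * (2 - 2 * cos y - y * sin y))) y := by
  obtain ⟨hA, hB, hD⟩ := signs h0 h1
  have hS := sin_pos_of_pos_of_lt_pi h0 h1
  have hC : 0 < 1 - cos y := sub_pos.2 (cos_lt_one' h0 h1)
  have hs := Real.hasDerivAt_sin y
  have hc := Real.hasDerivAt_cos y
  have hi := hasDerivAt_id' y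
  have d1 := (hi.sub hs).log hA.ne'
  have d2 := (hc.const_sub 1).log hC.ne'
  have d3 := hs.log hS.ne'
  have d4 := (((hc.const_mul 2).const_sub 2).sub (hi.mul hs)).log hB.ne'
  have d5 := (hi.log h0.ne').sub d3
  refine ((((d1.add d2).sub d3).sub d4).sub (d5.const_mul σ)).congr_deriv ?_
  simp only [PP, Pi.sub_apply, Pi.mul_apply]
  have key := Real.sin_sq_add_cos_sq y
  generalize sin y = S at *
  generalize cos y = C at *
  have e1 : (- -S) / (1 - C) = (1 + C) / S := by
    field_simp; linarith
  have e2 : (-(2 * -S) - (1 * S + y * C)) / (2 - 2 * C - y * S) =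
      (y - S) / (2 - 2 * C - y * S) + (1 + C) / S := by
    rw [div_add_div _ _ hB.ne' hS.ne', div_eq_div_iff hB.ne' (mul_pos hB hS).ne']
    linear_combination (2 * (2 - 2 * C - y * S)) * key
  rw [e1, e2]
  clear e1 e2 d4
  generalize 2 - 2 * C - y * S = B at *
  have hy := h0.ne'
  have hA' := hA.ne'
  have hB'' := hB.ne'
  have hS' := hS.ne'
  field_simp
  ring

open Filter Topology in
theorem Lf_lim (σ : ℝ) : Tendsto (Lf σ) (𝓝[>] 0) (𝓝 0) := by
  have hpow : Tendsto (fun y : ℝ => y ^ 2) (𝓝[>] 0) (𝓝 0) := by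
    have : Tendsto (fun y : ℝ => y ^ 2) (𝓝 0) (𝓝 (0 ^ 2)) := (continuous_pow 2).tendsto 0
    rw [zero_pow two_ne_zero] at this
    exact this.mono_left nhdsWithin_le_nhds
  have lift : ∀ (f : ℝ → ℝ) (c : ℝ), Continuous f → f 0 = c →
      Tendsto (fun y : ℝ => f (y ^ 2)) (𝓝[>] 0) (𝓝 c) := by
    intro f c hf h
    rw [← h]
    exact (hf.tendsto 0).comp hpow
  have hev : ∀ᶠ y : ℝ in 𝓝[>] 0, 0 < y := eventually_mem_nhdsWithin
  have hev2 : ∀ᶠ y : ℝ in 𝓝[>] 0, y < π :=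
    (eventually_lt_nhds pi_pos).filter_mono nhdsWithin_le_nhds
  have hA : Tendsto (fun y : ℝ => (y - sin y) / y ^ 3) (𝓝[>] 0) (𝓝 (1/6)) := by
    refine tendsto_of_tendsto_of_tendsto_of_le_of_le'
      (lift A0 (1/6) (by unfold A0; fun_prop) (by norm_num [A0]))
      (lift A1 (1/6) (by unfold A1; fun_prop) (by norm_num [A1])) ?_ ?_
    all_goals
      filter_upwards [hev] with y hy
      obtain ⟨α, β, δ, e1, e2, e3, a0, a1, b0, b1, d0, d1⟩ := parts y hy
      rw [e1, mul_div_cancel_left₀ _ (by positivity)]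
      assumption
  have hB : Tendsto (fun y : ℝ => (2 - 2 * cos y - y * sin y) / y ^ 4) (𝓝[>] 0) (𝓝 (1/12)) := by
    refine tendsto_of_tendsto_of_tendsto_of_le_of_le'
      (lift B0 (1/12) (by unfold B0; fun_prop) (by norm_num [B0]))
      (lift B1 (1/12) (by unfold B1; fun_prop) (by norm_num [B1])) ?_ ?_
    all_goals
      filter_upwards [hev] with y hy
      obtain ⟨α, β, δ, e1, e2, e3, a0, a1, b0, b1, d0, d1⟩ := parts y hy
      rw [e2, mul_div_cancel_left₀ _ (by positivity)]
      assumption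
  have hC : Tendsto (fun y : ℝ => (1 - cos y) / y ^ 2) (𝓝[>] 0) (𝓝 (1/2)) := by
    refine tendsto_of_tendsto_of_tendsto_of_le_of_le'
      (lift (fun t => 1/2 - 1/24 * t) (1/2) (by fun_prop) (by norm_num))
      (tendsto_const_nhds (x := (1/2 : ℝ))) ?_ ?_
    · filter_upwards [hev] with y hy
      have := tb4 y hy.le
      rw [le_div_iff₀ (by positivity)]
      linarith
    · filter_upwards [hev] with y hy
      have := tb2 y hy.le
      rw [div_le_iff₀ (by positivity)]
      linarith
  have hS : Tendsto (fun y : ℝ => sin y / y) (𝓝[>] 0) (𝓝 1) := by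
    refine tendsto_of_tendsto_of_tendsto_of_le_of_le'
      (lift (fun t => 1 - 1/6 * t) 1 (by fun_prop) (by norm_num))
      (tendsto_const_nhds (x := (1 : ℝ))) ?_ ?_
    · filter_upwards [hev] with y hy
      have := tb3 y hy.le
      rw [le_div_iff₀ (by positivity)]
      linarith
    · filter_upwards [hev] with y hy
      have := tb1 y hy.le
      rw [div_le_iff₀ (by positivity)]
      linarith
  have hh := (((hA.log (by norm_num)).add (hC.log (by norm_num))).sub (hS.log (by norm_num))).sub
    (hB.log (by norm_num)) |>.add ((hS.log (by norm_num)).const_mul σ)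
  have e0 : log (1/6) + log (1/2) - log 1 - log (1/12) + σ * log 1 = 0 := by
    rw [← Real.log_mul (by norm_num) (by norm_num)]
    norm_num
  rw [e0] at hh
  refine hh.congr' ?_
  filter_upwards [hev, hev2] with y h0 h1
  obtain ⟨pA, pB, _⟩ := signs h0 h1
  have pS := sin_pos_of_pos_of_lt_pi h0 h1
  have pC : 0 < 1 - cos y := sub_pos.2 (cos_lt_one' h0 h1)
  rw [Real.log_div pA.ne' (by positivity), Real.log_div pC.ne' (by positivity),
    Real.log_div pS.ne' h0.ne', Real.log_div pB.ne' (by positivity), Lf, Real.log_pow,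
    Real.log_pow, Real.log_pow]
  push_cast
  ring

open Filter Topology in
theorem pos_of_deriv_pos {f : ℝ → ℝ} {b c : ℝ} (hl : Tendsto f (𝓝[>] 0) (𝓝 c))
    (hd : ∀ y, 0 < y → y < b → ∃ d, HasDerivAt f d y ∧ 0 < d) :
    ∀ y, 0 < y → y < b → c < f y := by
  have hm : StrictMonoOn f (Ioo 0 b) := by
    apply strictMonoOn_of_deriv_pos (convex_Ioo 0 b)
    · intro z hz
      obtain ⟨d, h, _⟩ := hd z hz.1 hz.2
      exact h.continuousAt.continuousWithinAt
    · intro z hz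
      rw [interior_Ioo] at hz
      obtain ⟨d, h, h'⟩ := hd z hz.1 hz.2
      rwa [h.deriv]
  intro y h0 h1
  have h2 : c ≤ f (y/2) := by
    refine le_of_tendsto hl ?_
    have : ∀ᶠ z : ℝ in 𝓝[>] 0, z < y/2 :=
      (eventually_lt_nhds (by linarith)).filter_mono nhdsWithin_le_nhds
    filter_upwards [this, eventually_mem_nhdsWithin] with z hz hz0
    exact (hm ⟨hz0, by linarith⟩ ⟨by linarith, by linarith⟩ hz).le
  exact h2.trans_lt (hm ⟨by linarith, by linarith⟩ ⟨h0, h1⟩ (by linarith))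

open Filter Topology in
theorem neg_of_deriv_neg {f : ℝ → ℝ} {b c : ℝ} (hl : Tendsto f (𝓝[>] 0) (𝓝 c))
    (hd : ∀ y, 0 < y → y < b → ∃ d, HasDerivAt f d y ∧ d < 0) :
    ∀ y, 0 < y → y < b → f y < c := by
  intro y h0 h1
  have := pos_of_deriv_pos (f := fun y => - f y) (b := b) hl.neg (fun y h0 h1 => by
    obtain ⟨d, h, h'⟩ := hd y h0 h1
    exact ⟨-d, h.neg, by linarith⟩) y h0 h1
  linarith

theorem den_pos {y : ℝ} (h0 : 0 < y) (h1 : y < π) :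
    0 < y * sin y * (y - sin y) * (2 - 2 * cos y - y * sin y) := by
  obtain ⟨pA, pB, _⟩ := signs h0 h1
  have pS := sin_pos_of_pos_of_lt_pi h0 h1
  positivity

theorem lw_pos {y : ℝ} (h0 : 0 < y) (h1 : y < π) : 0 < log y - log (sin y) :=
  sub_pos.2 (Real.log_lt_log (sin_pos_of_pos_of_lt_pi h0 h1) (sin_lt h0))

theorem Lf_a {y : ℝ} (h0 : 0 < y) (h1 : y < π) : 0 < Lf (3/5) y := by
  refine pos_of_deriv_pos (b := π) (Lf_lim _) (fun y h0 h1 => ⟨_, Lf_deriv _ h0 h1, ?_⟩) y h0 h1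
  exact div_pos (PP_pos h0 h1 (by norm_num) (by norm_num)
    (ineq_a _ (by positivity) (sq_le_987 h0 h1))) (den_pos h0 h1)

theorem Lf_b {y : ℝ} (h0 : 0 < y) (h1 : y ≤ 11/5) : Lf (3/4) y < 0 := by
  have hpi := pi_gt_d2
  have main : ∀ y : ℝ, 0 < y → y < 11/5 → Lf (3/4) y < 0 := by
    refine neg_of_deriv_neg (b := 11/5) (Lf_lim _)
      (fun y h0 h1 => ⟨_, Lf_deriv _ h0 (by linarith), ?_⟩)
    exact div_neg_of_neg_of_pos (PP_neg h0 (by linarith) (by norm_num) (by norm_num)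
      (ineq_b _ (by positivity) (by nlinarith))) (den_pos h0 (by linarith))
  rcases h1.lt_or_eq with h | h
  · exact main y h0 h
  · have hm : StrictAntiOn (Lf (3/4)) (Icc 1 (11/5)) := by
      apply strictAntiOn_of_deriv_neg (convex_Icc _ _)
      · intro z hz
        exact (Lf_deriv _ (by linarith [hz.1])
          (by linarith [hz.2])).continuousAt.continuousWithinAt
      · intro z hz
        rw [interior_Icc] at hz
        have z0 : 0 < z := by linarith [hz.1]
        have z1 : z < π := by linarith [hz.2]
        rw [(Lf_deriv _ z0 z1).deriv]
        exact div_neg_of_neg_of_pos (PP_neg z0 z1 (by norm_num) (by norm_num)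
          (ineq_b _ (by positivity) (by nlinarith [hz.2]))) (den_pos z0 z1)
    have := hm (a := 1) (b := y) ⟨by norm_num, by norm_num⟩ ⟨by linarith, h1⟩ (by linarith)
    linarith [main 1 (by norm_num) (by norm_num)]

theorem Lf_c : StrictAntiOn (Lf (39/50)) (Ioc 0 (12/5)) := by
  have hpi := pi_gt_d2
  apply strictAntiOn_of_deriv_neg (convex_Ioc _ _)
  · intro z hz
    exact (Lf_deriv _ hz.1 (by linarith [hz.2])).continuousAt.continuousWithinAt
  · intro z hz
    rw [interior_Ioc] at hz
    have z0 : 0 < z := hz.1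
    have z1 : z < π := by linarith [hz.2]
    rw [(Lf_deriv _ z0 z1).deriv]
    exact div_neg_of_neg_of_pos (PP_neg z0 z1 (by norm_num) (by norm_num)
      (ineq_c _ (by positivity) (by nlinarith [hz.2]))) (den_pos z0 z1)

theorem Lf_d {s : ℝ} (hs : s ≤ 77/100) : StrictMonoOn (Lf s) (Ico (12/5) π) := by
  apply strictMonoOn_of_deriv_pos (convex_Ico _ _)
  · intro z hz
    exact (Lf_deriv _ (by linarith [hz.1]) hz.2).continuousAt.continuousWithinAt
  · intro z hz
    rw [interior_Ico] at hz
    have z0 : 0 < z := by linarith [hz.1]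
    have z1 : z < π := hz.2
    rw [(Lf_deriv _ z0 z1).deriv]
    refine div_pos ?_ (den_pos z0 z1)
    have h1 : 0 < PP (77/100) z := PP_pos z0 z1 (by norm_num) (by norm_num)
      (ineq_d _ (by nlinarith [hz.1]) (sq_le_987 z0 z1))
    obtain ⟨pA, pB, pD⟩ := signs z0 z1
    have h2 : PP s z = PP (77/100) z + (77/100 - s) * ((z - sin z) *
      ((2 - 2 * cos z - z * sin z) * (sin z - z * cos z))) := by
      rw [PP, PP]; ring
    have h3 : 0 ≤ (77/100 - s) * ((z - sin z) *
      ((2 - 2 * cos z - z * sin z) * (sin z - z * cos z))) :=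
      mul_nonneg (by linarith) (by positivity)
    linarith

theorem Lf_shift (s σ y : ℝ) : Lf s y = Lf σ y + (σ - s) * (log y - log (sin y)) := by
  rw [Lf, Lf]; ring

theorem Lf_neg {s y : ℝ} (hs : 153/200 ≤ s) (h0 : 0 < y) (h1 : y ≤ 12/5) : Lf s y < 0 := by
  have hpi := pi_gt_d2
  have hpi2 := pi_lt_d2
  have hy := lw_pos h0 (by linarith)
  rcases le_total y (11/5) with h | h
  · rw [Lf_shift s (3/4)]
    have := Lf_b h0 h
    nlinarith
  · rw [Lf_shift s (39/50)]
    have i1 : Lf (39/50) y ≤ Lf (39/50) (11/5) :=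
      Lf_c.antitoneOn ⟨by norm_num, by norm_num⟩ ⟨h0, h1⟩ h
    rw [Lf_shift (39/50) (3/4) (11/5)] at i1
    have i2 := Lf_b (y := 11/5) (by norm_num) le_rfl
    have i3 : log 2 ≤ log (11/5) - log (sin (11/5)) := by
      have hp : 0 < sin (11/5) := sin_pos_of_pos_of_lt_pi (by norm_num) (by linarith)
      rw [← Real.log_div (by norm_num) hp.ne']
      apply Real.log_le_log (by norm_num)
      rw [le_div_iff₀ hp]
      linarith [Real.sin_le_one (11/5)]
    have i4 : log y - log (sin y) ≤ 2 * log 2 := by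
      have hp : 0 < sin y := sin_pos_of_pos_of_lt_pi h0 (by linarith)
      have e : 2 * log 2 = log 4 := by
        rw [show (4 : ℝ) = 2 ^ 2 by norm_num, Real.log_pow]; norm_num
      rw [← Real.log_div h0.ne' hp.ne', e]
      apply Real.log_le_log (by positivity)
      rw [div_le_iff₀ hp]
      have j1 : sin (12/5) ≤ sin y := by
        rw [← Real.sin_pi_sub y, ← Real.sin_pi_sub (12/5)]
        apply Real.sin_le_sin_of_le_of_le_pi_div_two <;> linarith
      have j2 := tb11 (12/5) (by norm_num)
      norm_num at j2
      linarith
    nlinarith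

theorem Lf_e {s : ℝ} (hs : 3/5 < s) (hs1 : s ≤ 1) : ∃ η > 0, ∀ y, 0 < y → y < η → Lf s y < 0 := by
  obtain ⟨τ, hτ, h⟩ := ineq_e s hs
  have hpi := pi_gt_d2
  refine ⟨min 1 τ, by positivity, ?_⟩
  refine neg_of_deriv_neg (Lf_lim _) (fun y h0 h1 => ?_)
  have h2 : y < 1 := h1.trans_le (min_le_left _ _)
  have h3 : y < τ := h1.trans_le (min_le_right _ _)
  have h4 : y < π := by linarith
  refine ⟨_, Lf_deriv _ h0 h4, ?_⟩
  exact div_neg_of_neg_of_pos (PP_neg h0 h4 (by linarith) hs1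
    (h _ (by positivity) (by nlinarith))) (den_pos h0 h4)

noncomputable def Hf (s x : ℝ) : ℝ :=
  exp (2 * s * (log x - log (sin x))) + exp (s * (log x + log (cos x) - log (sin x)))

theorem Hf_eq (p : ℝ) {x : ℝ} (h0 : 0 < x) (h1 : x < π / 2) :
    (sin x / x) ^ (2 * p) + (tan x / x) ^ p = Hf (-p) x := by
  have hs : 0 < sin x := sin_pos_of_pos_of_lt_pi h0 (by linarith)
  have hc : 0 < cos x := cos_pos_of_mem_Ioo ⟨by linarith, h1⟩
  rw [tan_eq_sin_div_cos, Real.rpow_def_of_pos (by positivity), Real.rpow_def_of_pos (by positivity),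
    Real.log_div hs.ne' h0.ne', Real.log_div (by positivity) h0.ne', Real.log_div hs.ne' hc.ne', Hf]
  congr 2 <;> ring

/-- the derivative of `Hf` and its sign -/
theorem Hf_deriv {s x : ℝ} (hs0 : 0 < s) (h0 : 0 < x) (h1 : x < π / 2) :
    ∃ d, HasDerivAt (Hf s) d x ∧ (0 < Lf s (2 * x) → d < 0) ∧ (Lf s (2 * x) < 0 → 0 < d) := by
  have hs : 0 < sin x := sin_pos_of_pos_of_lt_pi h0 (by linarith)
  have hc : 0 < cos x := cos_pos_of_mem_Ioo ⟨by linarith, h1⟩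
  have y0 : 0 < 2 * x := by linarith
  have y1 : 2 * x < π := by linarith
  obtain ⟨pA, pB, pD⟩ := signs y0 y1
  have key := Real.sin_sq_add_cos_sq x
  have eA : 2 * x - sin (2 * x) = 2 * (x - sin x * cos x) := by rw [sin_two_mul]; ring
  have eC : 1 - cos (2 * x) = 2 * sin x ^ 2 := by rw [cos_two_mul]; linarith
  have eB : 2 - 2 * cos (2 * x) - 2 * x * sin (2 * x) = 4 * (sin x * (sin x - x * cos x)) := by
    rw [cos_two_mul, sin_two_mul]; linarith
  have qA : 0 < x - sin x * cos x := by rw [eA] at pA; linarith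
  have qB : 0 < sin x - x * cos x := by
    rw [eB] at pB
    exact pos_of_mul_pos_right (by linarith : 0 < sin x * (sin x - x * cos x)) hs.le
  have d1 := hasDerivAt_id' x |>.log h0.ne'
  have d2 := (Real.hasDerivAt_sin x).log hs.ne'
  have d3 := (Real.hasDerivAt_cos x).log hc.ne'
  have dd := (((d1.sub d2).const_mul (2 * s)).exp).add ((((d1.add d3).sub d2).const_mul s).exp)
  -- rewrite the derivative
  have hE1 : 0 < 2 * (sin x - x * cos x) / (x * sin x) := by positivity
  have hE2 : 0 < (x - sin x * cos x) / (x * sin x * cos x) := by positivity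
  have e1 : exp (2 * s * (log x - log (sin x))) * (2 * s * (1 / x - cos x / sin x)) =
      s * exp (2 * s * (log x - log (sin x)) + log (2 * (sin x - x * cos x) / (x * sin x))) := by
    rw [Real.exp_add, Real.exp_log hE1]; field_simp
  have e2 : exp (s * (log x + log (cos x) - log (sin x))) *
      (s * (1 / x + -sin x / cos x - cos x / sin x)) =
      - (s * exp (s * (log x + log (cos x) - log (sin x)) +
        log ((x - sin x * cos x) / (x * sin x * cos x)))) := by
    have : 1 / x + -sin x / cos x - cos x / sin x =
        - ((x - sin x * cos x) / (x * sin x * cos x)) := by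
      have : sin x ^ 2 = 1 - cos x ^ 2 := by linarith
      field_simp
      linear_combination (-x) * key
    rw [Real.exp_add, Real.exp_log hE2, this]; ring
  have eL : Lf s (2 * x) = (s * (log x + log (cos x) - log (sin x)) +
        log ((x - sin x * cos x) / (x * sin x * cos x))) -
      (2 * s * (log x - log (sin x)) + log (2 * (sin x - x * cos x) / (x * sin x))) := by
    rw [Lf, eA, eC, eB, sin_two_mul]
    have h4 : log 4 = 2 * log 2 := by
      rw [show (4 : ℝ) = 2 ^ 2 by norm_num, Real.log_pow]; norm_num
    rw [Real.log_div qA.ne' (by positivity), Real.log_div (by positivity) (by positivity),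
      Real.log_mul two_ne_zero qA.ne', Real.log_mul two_ne_zero (by positivity),
      Real.log_mul (by positivity : 2 * sin x ≠ 0) hc.ne', Real.log_mul two_ne_zero hs.ne',
      Real.log_mul (by norm_num : (4 : ℝ) ≠ 0) (by positivity),
      Real.log_mul hs.ne' qB.ne', Real.log_mul two_ne_zero h0.ne',
      Real.log_mul (by positivity : x * sin x ≠ 0) hc.ne', Real.log_mul h0.ne' hs.ne',
      Real.log_mul two_ne_zero qB.ne', Real.log_pow, h4]
    push_cast
    ring
  refine ⟨_, dd.congr_deriv (congrArg₂ (· + ·) e1 e2), fun h => ?_, fun h => ?_⟩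
  · rw [eL] at h
    have := mul_lt_mul_of_pos_left (Real.exp_lt_exp.2 (sub_pos.1 h)) hs0
    linarith
  · rw [eL] at h
    have := mul_lt_mul_of_pos_left (Real.exp_lt_exp.2 (sub_neg.1 h)) hs0
    linarith

open Filter Topology in
theorem Hf_lim (s : ℝ) : Tendsto (Hf s) (𝓝[>] 0) (𝓝 2) := by
  have hev : ∀ᶠ y : ℝ in 𝓝[>] 0, 0 < y := eventually_mem_nhdsWithin
  have hev2 : ∀ᶠ y : ℝ in 𝓝[>] 0, y < π / 2 :=
    (eventually_lt_nhds (by positivity)).filter_mono nhdsWithin_le_nhds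
  have hpow : Tendsto (fun y : ℝ => 1 - 1/6 * y ^ 2) (𝓝[>] 0) (𝓝 1) := by
    have : Tendsto (fun y : ℝ => 1 - 1/6 * y ^ 2) (𝓝 0) (𝓝 (1 - 1/6 * 0 ^ 2)) :=
      (by fun_prop : Continuous (fun y : ℝ => 1 - 1/6 * y ^ 2)).tendsto 0
    norm_num at this
    norm_num
    exact this.mono_left nhdsWithin_le_nhds
  have hS : Tendsto (fun y : ℝ => sin y / y) (𝓝[>] 0) (𝓝 1) := by
    refine tendsto_of_tendsto_of_tendsto_of_le_of_le' hpow
      (tendsto_const_nhds (x := (1 : ℝ))) ?_ ?_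
    · filter_upwards [hev] with y hy
      have := tb3 y hy.le
      rw [le_div_iff₀ (by positivity)]
      linarith
    · filter_upwards [hev] with y hy
      have := tb1 y hy.le
      rw [div_le_iff₀ (by positivity)]
      linarith
  have hC : Tendsto cos (𝓝[>] 0) (𝓝 1) := by
    have := Real.continuous_cos.tendsto 0
    rw [cos_zero] at this
    exact this.mono_left nhdsWithin_le_nhds
  have hSl := hS.log (by norm_num)
  have hCl := hC.log (by norm_num)
  have h := ((hSl.const_mul (-2 * s)).rexp).add (((hCl.sub hSl).const_mul s).rexp)
  have e : rexp (-2 * s * log 1) + rexp (s * (log 1 - log 1)) = 2 := by norm_num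
  rw [e] at h
  refine h.congr' ?_
  filter_upwards [hev, hev2] with x h0 h1
  have hs : 0 < sin x := sin_pos_of_pos_of_lt_pi h0 (by linarith)
  rw [Real.log_div hs.ne' h0.ne', Hf]
  congr 2 <;> ring

open Filter Topology in
theorem Hf_lim' {s : ℝ} (hs : 0 < s) :
    Tendsto (Hf s) (𝓝[<] (π / 2)) (𝓝 (exp (2 * s * (log π - log 2)))) := by
  have hpi := pi_pos
  have c1 : Tendsto (fun x => exp (2 * s * (log x - log (sin x)))) (𝓝[<] (π / 2))
      (𝓝 (exp (2 * s * (log π - log 2)))) := by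
    have : ContinuousAt (fun x => exp (2 * s * (log x - log (sin x)))) (π / 2) := by
      have h1 : π / 2 ≠ 0 := by positivity
      have h2 : sin (π / 2) ≠ 0 := by simp
      fun_prop (disch := assumption)
    have h := this.tendsto
    simp only [sin_pi_div_two, Real.log_one, sub_zero] at h
    rw [Real.log_div hpi.ne' two_ne_zero] at h
    exact h.mono_left nhdsWithin_le_nhds
  have c2 : Tendsto (fun x => exp (s * (log x + log (cos x) - log (sin x)))) (𝓝[<] (π / 2))
      (𝓝 0) := by
    have hev : ∀ᶠ x : ℝ in 𝓝[<] (π / 2), 0 < x :=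
      (eventually_gt_nhds (by positivity)).filter_mono nhdsWithin_le_nhds
    have hev2 : ∀ᶠ x : ℝ in 𝓝[<] (π / 2), x < π / 2 := eventually_mem_nhdsWithin
    have : ContinuousAt (fun x => (x * cos x / sin x) ^ s) (π / 2) := by
      have h2 : sin (π / 2) ≠ 0 := by simp
      have h3 : ContinuousAt (fun x => x * cos x / sin x) (π / 2) := by
        fun_prop (disch := assumption)
      exact h3.rpow_const (Or.inr hs.le)
    have h := this.tendsto
    simp only [cos_pi_div_two, mul_zero, zero_div, Real.zero_rpow hs.ne'] at h
    refine (h.mono_left nhdsWithin_le_nhds).congr' ?_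
    filter_upwards [hev, hev2] with x h0 h1
    have hs : 0 < sin x := sin_pos_of_pos_of_lt_pi h0 (by linarith)
    have hc : 0 < cos x := cos_pos_of_mem_Ioo ⟨by linarith, h1⟩
    rw [Real.rpow_def_of_pos (by positivity), Real.log_div (by positivity) hs.ne',
      Real.log_mul h0.ne' hc.ne', mul_comm]
  have := c1.add c2
  rw [add_zero] at this
  exact this

theorem Hf_a {x : ℝ} (h0 : 0 < x) (h1 : x < π / 2) : Hf (3/5) x < 2 := by
  refine neg_of_deriv_neg (b := π / 2) (Hf_lim _) (fun x h0 h1 => ?_) x h0 h1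
  obtain ⟨d, hd, hn, _⟩ := Hf_deriv (s := 3/5) (by norm_num) h0 h1
  exact ⟨d, hd, hn (Lf_a (by linarith) (by linarith))⟩

theorem Hf_e {s : ℝ} (hs : 3/5 < s) (hs1 : s ≤ 1) :
    ∃ x, 0 < x ∧ x < π / 2 ∧ 2 < Hf s x := by
  obtain ⟨η, hη, h⟩ := Lf_e hs hs1
  have hpi := pi_pos
  have hm : 0 < min (η / 2) (π / 2) := by positivity
  refine ⟨min (η / 2) (π / 2) / 2, by linarith, by linarith [min_le_right (η / 2) (π / 2)], ?_⟩
  refine pos_of_deriv_pos (b := min (η / 2) (π / 2)) (Hf_lim _) (fun x h0 h1 => ?_) _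
    (by linarith) (by linarith)
  have h2 : x < η / 2 := h1.trans_le (min_le_left _ _)
  have h3 : x < π / 2 := h1.trans_le (min_le_right _ _)
  obtain ⟨d, hd, _, hn⟩ := Hf_deriv (s := s) (by linarith) h0 h3
  exact ⟨d, hd, hn (h _ (by linarith) (by linarith))⟩

open Filter Topology in
theorem Hf_s {s : ℝ} (hs : 153/200 ≤ s) (hs1 : s ≤ 77/100)
    (he : exp (2 * s * (log π - log 2)) = 2) {x : ℝ} (h0 : 0 < x) (h1 : x < π / 2) :
    2 < Hf s x := by
  have hpi := pi_gt_d2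
  have hs0 : 0 < s := by linarith
  have cont : ∀ z, 0 < z → z < π / 2 → ContinuousAt (Hf s) z := by
    intro z z0 z1
    obtain ⟨d, hd, _⟩ := Hf_deriv hs0 z0 z1
    exact hd.continuousAt
  have low : ∀ z : ℝ, 0 < z → z ≤ 6/5 → 2 < Hf s z := by
    have hm : StrictMonoOn (Hf s) (Ioc 0 (6/5)) := by
      apply strictMonoOn_of_deriv_pos (convex_Ioc _ _)
      · intro z hz
        exact (cont z hz.1 (by linarith [hz.2])).continuousWithinAt
      · intro z hz
        rw [interior_Ioc] at hz
        obtain ⟨d, hd, _, hn⟩ := Hf_deriv hs0 hz.1 (by linarith [hz.2])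
        rw [hd.deriv]
        exact hn (Lf_neg hs (by linarith [hz.1]) (by linarith [hz.2]))
    have base := pos_of_deriv_pos (b := 6/5) (Hf_lim s) (fun z z0 z1 => by
      obtain ⟨d, hd, _, hn⟩ := Hf_deriv hs0 z0 (by linarith)
      exact ⟨d, hd, hn (Lf_neg hs (by linarith) (by linarith))⟩)
    intro z z0 z1
    have := base (z/2) (by linarith) (by linarith)
    exact this.trans (hm ⟨by linarith, by linarith⟩ ⟨z0, z1⟩ (by linarith))
  rcases le_or_gt x (6/5) with h | h
  · exact low x h0 h
  by_contra! hx
  have hlow := low (6/5) (by norm_num) le_rfl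
  -- a point where the derivative is negative
  obtain ⟨c, hc, hcd⟩ := exists_deriv_eq_slope (Hf s) h
    (fun z hz => (cont z (by linarith [hz.1]) (by linarith [hz.2])).continuousWithinAt)
    (fun z hz => by
      obtain ⟨d, hd, _⟩ := Hf_deriv hs0 (x := z) (by linarith [hz.1]) (by linarith [hz.2])
      exact hd.differentiableAt.differentiableWithinAt)
  have hneg : deriv (Hf s) c < 0 := by
    rw [hcd]
    exact div_neg_of_neg_of_pos (by linarith) (by linarith)
  have hLc : 0 ≤ Lf s (2 * c) := by
    by_contra! hl
    obtain ⟨d, hd, _, hn⟩ := Hf_deriv hs0 (x := c) (by linarith [hc.1]) (by linarith [hc.2])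
    rw [hd.deriv] at hneg
    linarith [hn hl]
  have hL : ∀ z, c < z → z < π / 2 → 0 < Lf s (2 * z) := by
    intro z z0 z1
    exact hLc.trans_lt (Lf_d hs1 ⟨by linarith [hc.1], by linarith⟩
      ⟨by linarith [hc.1], by linarith⟩ (by linarith))
  have hm : StrictAntiOn (Hf s) (Ico x (π / 2)) := by
    apply strictAntiOn_of_deriv_neg (convex_Ico _ _)
    · intro z hz
      exact (cont z (by linarith [hz.1]) hz.2).continuousWithinAt
    · intro z hz
      rw [interior_Ico] at hz
      obtain ⟨d, hd, hn, _⟩ := Hf_deriv hs0 (x := z) (by linarith [hz.1]) hz.2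
      rw [hd.deriv]
      exact hn (hL z (by linarith [hz.1, hc.2]) hz.2)
  obtain ⟨m, hm0⟩ : ∃ m, m = (x + π / 2) / 2 := ⟨_, rfl⟩
  have hxm : Hf s m < Hf s x :=
    hm ⟨le_rfl, h1⟩ ⟨by linarith, by linarith⟩ (by linarith)
  have hlim := Hf_lim' hs0
  rw [he] at hlim
  have : 2 ≤ Hf s m := by
    refine le_of_tendsto hlim ?_
    have hev : ∀ᶠ z : ℝ in 𝓝[<] (π / 2), m < z :=
      (eventually_gt_nhds (by linarith)).filter_mono nhdsWithin_le_nhds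
    filter_upwards [hev, eventually_mem_nhdsWithin] with z hz hz1
    exact (hm ⟨by linarith, by linarith⟩ ⟨by linarith, hz1⟩ hz).le
  linarith

theorem Hf_conv (x r r' lam : ℝ) (h0 : 0 ≤ lam) (h1 : lam ≤ 1) :
    Hf (lam * r + (1 - lam) * r') x ≤ lam * Hf r x + (1 - lam) * Hf r' x := by
  have hc := convexOn_exp
  rw [Hf, Hf, Hf]
  have i1 := hc.2 (mem_univ (2 * r * (log x - log (sin x))))
    (mem_univ (2 * r' * (log x - log (sin x)))) h0 (sub_nonneg.2 h1) (by ring)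
  have i2 := hc.2 (mem_univ (r * (log x + log (cos x) - log (sin x))))
    (mem_univ (r' * (log x + log (cos x) - log (sin x)))) h0 (sub_nonneg.2 h1) (by ring)
  simp only [smul_eq_mul] at i1 i2
  have e1 : lam * (2 * r * (log x - log (sin x))) + (1 - lam) * (2 * r' * (log x - log (sin x))) =
    2 * (lam * r + (1 - lam) * r') * (log x - log (sin x)) := by ring
  have e2 : lam * (r * (log x + log (cos x) - log (sin x))) +
      (1 - lam) * (r' * (log x + log (cos x) - log (sin x))) =
    (lam * r + (1 - lam) * r') * (log x + log (cos x) - log (sin x)) := by ring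
  rw [e1] at i1
  rw [e2] at i2
  linarith

theorem Hf_zero (x : ℝ) : Hf 0 x = 2 := by
  rw [Hf]; norm_num

/-- The chord bound coming from convexity in the exponent. -/
theorem Hf_chord (x : ℝ) {r r' : ℝ} (h0 : 0 < r) (h1 : r ≤ r') :
    Hf r x - 2 ≤ r / r' * (Hf r' x - 2) := by
  have hr' : 0 < r' := by linarith
  have := Hf_conv x r' 0 (r / r') (by positivity) ((div_le_one hr').2 h1)
  rw [Hf_zero, mul_zero, add_zero, div_mul_cancel₀ _ hr'.ne'] at this
  linarith

theorem Hf_neg_r {x r r' : ℝ} (h0 : r < 0) (h1 : 0 < r') (h : Hf r' x < 2) : 2 < Hf r x := by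
  have hd : 0 < r' - r := by linarith
  have := Hf_conv x r r' (r' / (r' - r)) (by positivity) ((div_le_one hd).2 (by linarith))
  have e : r' / (r' - r) * r + (1 - r' / (r' - r)) * r' = 0 := by field_simp; ring
  rw [e, Hf_zero] at this
  have hl : 0 < r' / (r' - r) := by positivity
  have hl1 : 0 < 1 - r' / (r' - r) := by
    rw [sub_pos, div_lt_one hd]; linarith
  by_contra! hx
  nlinarith

theorem s_bounds : 153/200 ≤ log 2 / (2 * (log π - log 2)) ∧
    log 2 / (2 * (log π - log 2)) ≤ 77/100 ∧ 0 < log π - log 2 := by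
  have hlt := pi_lt_d4
  have hgt := pi_gt_d4
  have hpos : 0 < log π - log 2 := by
    rw [sub_pos]; exact Real.log_lt_log (by norm_num) (by linarith)
  have e : log π - log 2 = log (π / 2) := (Real.log_div pi_pos.ne' two_ne_zero).symm
  refine ⟨?_, ?_, hpos⟩
  · rw [le_div_iff₀ (by linarith), e]
    have : log ((π / 2) ^ 153) ≤ log (2 ^ 100) := by
      apply Real.log_le_log (by positivity)
      calc (π / 2) ^ 153 ≤ (1.5708 : ℝ) ^ 153 := by gcongr; linarith
        _ ≤ _ := by norm_num
    rw [Real.log_pow, Real.log_pow] at this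
    push_cast at this
    linarith
  · rw [div_le_iff₀ (by linarith), e]
    have : log (2 ^ 100) ≤ log ((π / 2) ^ 154) := by
      apply Real.log_le_log (by positivity)
      calc (2 : ℝ) ^ 100 ≤ (1.57075 : ℝ) ^ 154 := by norm_num
        _ ≤ _ := by gcongr; linarith
    rw [Real.log_pow, Real.log_pow] at this
    push_cast at this
    linarith

open Filter Topology in
theorem wilker_zhu_trig_main (p q : ℝ) (hp : p ≠ 0) (hq : q ≠ 0) :
    ((∀ x ∈ Ioo (0 : ℝ) (π / 2),
        (sin x / x) ^ (2 * p) + (tan x / x) ^ p > 2) ↔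
      (0 < p ∨ p ≤ -(Real.log 2 / (2 * (Real.log π - Real.log 2))))) ∧
    ((∀ x ∈ Ioo (0 : ℝ) (π / 2),
        (sin x / x) ^ (2 * q) + (tan x / x) ^ q < 2) ↔
      (-(3 / 5) ≤ q ∧ q < 0)) := by
  obtain ⟨b1, b2, b3⟩ := s_bounds
  have hpi := pi_pos
  have hpi2 := pi_gt_d2
  have he : exp (2 * (log 2 / (2 * (log π - log 2))) * (log π - log 2)) = 2 := by
    have : 2 * (log 2 / (2 * (log π - log 2))) * (log π - log 2) = log 2 := by field_simp
    rw [this, Real.exp_log two_pos]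
  constructor
  · constructor
    · intro h
      by_contra! hcon
      obtain ⟨c1, c2⟩ := hcon
      have hp0 : 0 < -p := by
        have := lt_of_le_of_ne c1 hp
        linarith
      have hlim := Hf_lim' hp0
      have hlt : exp (2 * (-p) * (log π - log 2)) < 2 := by
        refine lt_of_lt_of_eq (Real.exp_lt_exp.2 ?_) he
        have : -p < log 2 / (2 * (log π - log 2)) := by linarith
        nlinarith
      have h1 := hlim.eventually (gt_mem_nhds hlt)
      have hev : ∀ᶠ x : ℝ in 𝓝[<] (π / 2), 0 < x :=
        (eventually_gt_nhds (by positivity)).filter_mono nhdsWithin_le_nhds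
      obtain ⟨x, hx, x0, x1⟩ := (h1.and (hev.and eventually_mem_nhdsWithin)).exists
      have := h x ⟨x0, x1⟩
      rw [Hf_eq p x0 x1] at this
      linarith
    · rintro h x ⟨x0, x1⟩
      rw [Hf_eq p x0 x1]
      rcases h with h | h
      · exact Hf_neg_r (by linarith) (by norm_num) (Hf_a x0 x1)
      · have h2 := Hf_s b1 b2 he x0 x1
        have h3 := Hf_chord x (r := log 2 / (2 * (log π - log 2))) (r' := -p) (by linarith)
          (by linarith)
        by_contra! hx
        have : log 2 / (2 * (log π - log 2)) / (-p) * (Hf (-p) x - 2) ≤ 0 :=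
          mul_nonpos_of_nonneg_of_nonpos (div_nonneg (by linarith) (by linarith)) (by linarith)
        linarith
  · constructor
    · intro h
      have hq0 : q < 0 := by
        by_contra! hq0
        have hq1 : 0 < q := lt_of_le_of_ne hq0 hq.symm
        have h1 := h 1 ⟨by norm_num, by linarith⟩
        rw [Hf_eq q (by norm_num) (by linarith)] at h1
        have := Hf_neg_r (r := -q) (by linarith) (by norm_num)
          (Hf_a (x := 1) (by norm_num) (by linarith))
        linarith
      refine ⟨?_, hq0⟩
      by_contra! hcon
      obtain ⟨x, x0, x1, hx⟩ := Hf_e (s := min (-q) 1) (lt_min (by linarith) (by norm_num))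
        (min_le_right _ _)
      have h1 := h x ⟨x0, x1⟩
      rw [Hf_eq q x0 x1] at h1
      have hm : 0 < min (-q) 1 := lt_min (by linarith) one_pos
      have h3 := Hf_chord x (r := min (-q) 1) (r' := -q) hm (min_le_left _ _)
      have : min (-q) 1 / (-q) * (Hf (-q) x - 2) ≤ 0 :=
        mul_nonpos_of_nonneg_of_nonpos (div_nonneg hm.le (by linarith)) (by linarith)
      linarith
    · rintro ⟨h1, h2⟩ x ⟨x0, x1⟩
      rw [Hf_eq q x0 x1]
      have h3 := Hf_chord x (r := -q) (r' := 3/5) (by linarith) (by linarith)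
      have h4 := Hf_a x0 x1
      have : -q / (3/5) * (Hf (3/5) x - 2) < 0 :=
        mul_neg_of_pos_of_neg (div_pos (by linarith) (by norm_num)) (by linarith)
      linarith

theorem wilker_zhu_trig (p q : ℝ) (hp : p ≠ 0) (hq : q ≠ 0) :
    ((∀ x ∈ Ioo (0 : ℝ) (π / 2),
        (sin x / x) ^ (2 * p) + (tan x / x) ^ p > 2) ↔
      (0 < p ∨ p ≤ -(Real.log 2 / (2 * (Real.log π - Real.log 2))))) ∧
    ((∀ x ∈ Ioo (0 : ℝ) (π / 2),
        (sin x / x) ^ (2 * q) + (tan x / x) ^ q < 2) ↔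
      (-(3 / 5) ≤ q ∧ q < 0)) :=
  wilker_zhu_trig_main p q hp hq
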